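/- Let G be a connected normalized weighted graph on k vertices and set ε = 1/(35 · β(G)). If k ≥ 3, then G has a 3-way split with density at most (2 − ε/2)/k. If k ≥ 4, then G has a 4-way split with density at most (2 − ε/3)/k. -/

import Mathlib

open Finset

namespace KCut

open scoped Classical

/-- Number of connected components of a graph. -/
noncomputable def numComp {V : Type*} (G : SimpleGraph V) : ℕ :=
  Nat.card G.ConnectedComponent

/-- `S` is an `h`-way split of `G`: a set of edges of `G` whose removal increases the
number of connected components by `h - 1`. -/
def IsSplit {V : Type*} (G : SimpleGraph V) (S : Finset (Sym2 V)) (h : ℕ) : Prop :=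
  ↑S ⊆ G.edgeSet ∧ numComp (G.deleteEdges ↑S) = (h - 1) + numComp G

/-- Total weight of a finite set of edges. -/
noncomputable def weight {V : Type*} (w : Sym2 V → ℝ) (S : Finset (Sym2 V)) : ℝ :=
  ∑ e ∈ S, w e

/-- Density of an `h`-way split: its weight divided by `h - 1`. -/
noncomputable def density {V : Type*} (w : Sym2 V → ℝ) (S : Finset (Sym2 V)) (h : ℕ) : ℝ :=
  weight w S / ((h : ℝ) - 1)

/-- `β(G) = |E|/|V|`. -/
noncomputable def beta {V : Type*} [Fintype V] (G : SimpleGraph V) [Fintype G.edgeSet] : ℝ :=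
  (G.edgeFinset.card : ℝ) / (Fintype.card V : ℝ)

/-- A matching: a set of pairwise vertex-disjoint edges of `G`. -/
def IsMatchingSet {V : Type*} (G : SimpleGraph V) (M : Finset (Sym2 V)) : Prop :=
  ↑M ⊆ G.edgeSet ∧ ∀ e ∈ M, ∀ f ∈ M, e ≠ f → ∀ v : V, v ∈ e → v ∉ f

/-- A minimum `h`-way split: an `h`-way split of minimum total weight. -/
def IsMinSplit {V : Type*} (G : SimpleGraph V) (w : Sym2 V → ℝ)
    (S : Finset (Sym2 V)) (h : ℕ) : Prop :=
  IsSplit G S h ∧ ∀ T : Finset (Sym2 V), IsSplit G T h → weight w S ≤ weight w T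

/-- An `h`-way split `S` is sparse if no split of separation degree at most `h`
has smaller density. -/
def IsSparse {V : Type*} (G : SimpleGraph V) (w : Sym2 V → ℝ)
    (S : Finset (Sym2 V)) (h : ℕ) : Prop :=
  ∀ h' : ℕ, h' ≤ h → 2 ≤ h' → ∀ S' : Finset (Sym2 V), IsSplit G S' h' →
    density w S h ≤ density w S' h'

/-!
Isolating a set `s` of `n` vertices by deleting all edges that meet it gives an `(n + 1)`-way split.
Its weight is the sum of the weighted degrees over `s` minus the weight of the edges inside `s`. The
weighted degrees have average `2 / |V|`, so we need `n` vertices where this beats the average by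
`ε / |V|`. If no `n` vertices have total degree that small, then, by averaging over subsets and
supersets, no set of vertices has total degree more than `ε / 2` above average. Hence there are few
vertices of large degree, and the edges that avoid them carry so much weight that one of them, `ab`,
outweighs the combined excess of its endpoints by `ε / |V|`. Extending `{a, b}` to `n` vertices by
vertices of small degree then gives the required set.
-/

section Components

variable {V : Type*}

lemma reachable_deleteEdges_pair_or {G : SimpleGraph V} {x y : V} (h : G.Reachable x y) (a b : V) :
    (G.deleteEdges {s(a, b)}).Reachable x y ∨
      (G.deleteEdges {s(a, b)}).Reachable x a ∨ (G.deleteEdges {s(a, b)}).Reachable x b := by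
  obtain ⟨p⟩ := h
  induction p with
  | nil => exact .inl .rfl
  | @cons u v _ huv _ ih =>
    by_cases he : s(u, v) = s(a, b)
    · rcases Sym2.eq_iff.mp he with ⟨rfl, -⟩ | ⟨rfl, -⟩
      · exact .inr (.inl .rfl)
      · exact .inr (.inr .rfl)
    · have huv' : (G.deleteEdges {s(a, b)}).Reachable u v :=
        (SimpleGraph.deleteEdges_adj.mpr ⟨huv, he⟩).reachable
      exact ih.imp huv'.trans (Or.imp huv'.trans huv'.trans)

lemma numComp_deleteEdges_singleton_le [Finite V] (G : SimpleGraph V) (e : Sym2 V) :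
    numComp (G.deleteEdges {e}) ≤ numComp G + 1 := by
  obtain ⟨a, b⟩ := e
  set G' := G.deleteEdges {s(a, b)}
  let f (C : G'.ConnectedComponent) : Option G.ConnectedComponent :=
    if C = G'.connectedComponentMk a then none
    else some (C.map (SimpleGraph.Hom.ofLE (G.deleteEdges_le _)))
  -- A component of `G` splits into at most two, one of which contains `a`.
  have hf : f.Injective := by
    intro C D hCD
    induction C using SimpleGraph.ConnectedComponent.ind with | _ x
    induction D using SimpleGraph.ConnectedComponent.ind with | _ y
    by_cases hx : G'.Reachable x a <;> by_cases hy : G'.Reachable y a <;>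
      simp only [f, SimpleGraph.ConnectedComponent.eq, hx, hy, if_true, if_false, reduceCtorEq,
        Option.some.injEq] at hCD ⊢
    · exact hx.trans hy.symm
    · have hG : G.Reachable x y := SimpleGraph.ConnectedComponent.exact hCD
      rcases reachable_deleteEdges_pair_or hG a b with hxy | hxa | hxb
      · exact hxy
      · exact absurd hxa hx
      rcases reachable_deleteEdges_pair_or hG.symm a b with hyx | hya | hyb
      · exact hyx.symm
      · exact absurd hya hy
      · exact hxb.trans hyb.symm
  rw [numComp, numComp, ← Finite.card_option]
  exact Nat.card_le_card_of_injective f hf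

lemma exists_subset_numComp_deleteEdges_eq [Finite V] (G : SimpleGraph V) (S : Finset (Sym2 V))
    {n : ℕ} (hn : numComp G ≤ n) (hS : n ≤ numComp (G.deleteEdges ↑S)) :
    ∃ T ⊆ S, numComp (G.deleteEdges ↑T) = n := by
  induction S using Finset.induction_on with
  | empty =>
    rw [coe_empty, SimpleGraph.deleteEdges_empty] at hS
    exact ⟨∅, subset_rfl, by simpa using hn.antisymm hS⟩
  | insert e S _ ih =>
    by_cases hSn : n ≤ numComp (G.deleteEdges ↑S)
    · obtain ⟨T, hTS, hT⟩ := ih hSn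
      exact ⟨T, hTS.trans (subset_insert e S), hT⟩
    · have hstep := numComp_deleteEdges_singleton_le (G.deleteEdges ↑S) e
      rw [SimpleGraph.deleteEdges_deleteEdges, Set.union_singleton, ← coe_insert] at hstep
      exact ⟨insert e S, subset_rfl, by omega⟩

lemma card_add_one_le_numComp_of_isolated [Fintype V] {G : SimpleGraph V} {s : Finset V}
    (hs : #s < Fintype.card V) (hG : ∀ x ∈ s, ∀ y, ¬ G.Adj x y) : #s + 1 ≤ numComp G := by
  obtain ⟨z, hz⟩ : ∃ z, z ∉ s := by
    by_contra! h
    exact hs.ne ((card_eq_iff_eq_univ s).mpr (eq_univ_iff_forall.mpr h))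
  have eq_of_reachable {x y : V} (hx : x ∈ s) : G.Reachable x y → x = y
    | ⟨.nil⟩ => rfl
    | ⟨.cons h _⟩ => (hG x hx _ h).elim
  have hinj : Set.InjOn G.connectedComponentMk (insert z s : Finset V) := by
    intro x hx y hy hxy
    rw [SimpleGraph.ConnectedComponent.eq] at hxy
    rcases mem_insert.mp hx with rfl | hx
    · rcases mem_insert.mp hy with rfl | hy
      · rfl
      · exact (eq_of_reachable hy hxy.symm).symm
    · exact eq_of_reachable hx hxy
  rw [← card_insert_of_notMem hz, numComp, Nat.card_eq_fintype_card, ← card_image_of_injOn hinj]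
  exact card_le_univ _

lemma numComp_eq_one_of_connected {G : SimpleGraph V} (hG : G.Connected) : numComp G = 1 :=
  Nat.card_eq_one_iff_unique.mpr
    ⟨hG.preconnected.subsingleton_connectedComponent, hG.nonempty.map G.connectedComponentMk⟩

end Components

section Averaging

variable {𝕜 : Type*} [Field 𝕜] [LinearOrder 𝕜] [IsStrictOrderedRing 𝕜]

lemma exists_subset_card_eq_card_mul_sum_le {ι : Type*} (f : ι → 𝕜) (U : Finset ι) {n : ℕ}
    (hn : n ≤ #U) : ∃ s ⊆ U, #s = n ∧ #U * ∑ i ∈ s, f i ≤ n * ∑ i ∈ U, f i := by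
  induction n with
  | zero => exact ⟨∅, empty_subset U, rfl, by simp⟩
  | succ n ih =>
    obtain ⟨s, hsU, rfl, hs⟩ := ih (by omega)
    have hcard : (#(U \ s) : 𝕜) = #U - #s := by
      rw [card_sdiff_of_subset hsU, Nat.cast_sub (card_le_card hsU)]
    have hpos : 0 < #(U \ s) := by rw [card_sdiff_of_subset hsU]; omega
    obtain ⟨x, hx, hmin⟩ := exists_min_image (U \ s) f (card_pos.mp hpos)
    obtain ⟨hxU, hxs⟩ := mem_sdiff.mp hx
    have hfx : (#U - #s) * f x ≤ ∑ i ∈ U, f i - ∑ i ∈ s, f i := by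
      rw [← hcard, ← sum_sdiff hsU, add_sub_cancel_right, ← nsmul_eq_mul]
      exact card_nsmul_le_sum _ _ _ hmin
    refine ⟨insert x s, insert_subset hxU hsU, card_insert_of_notMem hxs, ?_⟩
    have hsU' : (#s : 𝕜) + 1 ≤ #U := mod_cast hn
    rw [sum_insert hxs]
    push_cast
    refine le_of_mul_le_mul_left ?_ (show (0 : 𝕜) < #U - #s by linarith)
    nlinarith [mul_le_mul_of_nonneg_left hfx (Nat.cast_nonneg (α := 𝕜) #U),
      mul_le_mul_of_nonneg_left hs (show (0 : 𝕜) ≤ #U - #s - 1 by linarith)]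

variable {V : Type*} [Fintype V] {f : V → 𝕜}

lemma exists_superset_card_eq_card_mul_sum_le (hf : ∑ v, f v = 0) {s : Finset V} {n : ℕ}
    (hsn : #s ≤ n) (hn : n ≤ Fintype.card V) :
    ∃ t, s ⊆ t ∧ #t = n ∧
      (Fintype.card V - #s) * ∑ v ∈ t, f v ≤ (Fintype.card V - n) * ∑ v ∈ s, f v := by
  obtain ⟨u, hu, hcard, hsum⟩ := exists_subset_card_eq_card_mul_sum_le f sᶜ (n := n - #s)
    (by rw [card_compl]; omega)
  have hdisj : Disjoint s u := disjoint_right.mpr fun v hv => mem_compl.mp (hu hv)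
  have hcompl := sum_add_sum_compl s f
  rw [card_compl, Nat.cast_sub (hsn.trans hn), Nat.cast_sub hsn,
    show ∑ v ∈ sᶜ, f v = -∑ v ∈ s, f v by linarith] at hsum
  refine ⟨s ∪ u, subset_union_left, by rw [card_union_of_disjoint hdisj]; omega, ?_⟩
  rw [sum_union hdisj]
  linarith

lemma exists_superset_card_eq_sum_le (hf : ∑ v, f v = 0) {s : Finset V} {n : ℕ}
    (hsn : #s ≤ n) (hn : n < Fintype.card V) {c : 𝕜} (hc : 0 ≤ c) (hs : ∑ v ∈ s, f v ≤ c) :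
    ∃ t, s ⊆ t ∧ #t = n ∧ ∑ v ∈ t, f v ≤ c := by
  obtain ⟨t, hst, ht, hsum⟩ := exists_superset_card_eq_card_mul_sum_le hf hsn hn.le
  have hsn' : (#s : 𝕜) ≤ n := mod_cast hsn
  have hn' : (n : 𝕜) < Fintype.card V := mod_cast hn
  refine ⟨t, hst, ht, le_of_mul_le_mul_left ?_ (show 0 < (Fintype.card V : 𝕜) - #s by linarith)⟩
  nlinarith

lemma neg_card_mul_le_two_mul_sum (hf : ∑ v, f v = 0) {n : ℕ} (hn2 : 2 ≤ n)
    (hn : n + 2 ≤ Fintype.card V) {ε : 𝕜} (hε : 0 ≤ ε)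
    (hcard : ∀ s : Finset V, #s = n → -ε ≤ ∑ v ∈ s, f v) (T : Finset V) :
    -(Fintype.card V * ε) ≤ 2 * ∑ v ∈ T, f v := by
  have hn2' : (2 : 𝕜) ≤ n := mod_cast hn2
  have hn' : (n : 𝕜) + 2 ≤ Fintype.card V := mod_cast hn
  rcases T.eq_empty_or_nonempty with rfl | hT
  · simpa using by positivity
  have hT1 : (1 : 𝕜) ≤ #T := mod_cast hT.card_pos
  have hTV : (#T : 𝕜) ≤ Fintype.card V := mod_cast card_le_univ T
  rcases le_total n #T with hnT | hTn
  · obtain ⟨s, -, hs, hsum⟩ := exists_subset_card_eq_card_mul_sum_le f T hnT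
    have hlow := mul_le_mul_of_nonneg_left (hcard s hs) (Nat.cast_nonneg (α := 𝕜) #T)
    have : n * -(Fintype.card V * ε) ≤ n * (2 * ∑ v ∈ T, f v) := by
      nlinarith [mul_le_mul_of_nonneg_right hTV hε,
        mul_le_mul_of_nonneg_right hn2' (show 0 ≤ #T * ε by positivity)]
    exact le_of_mul_le_mul_left this (by linarith)
  · obtain ⟨s, -, hs, hsum⟩ := exists_superset_card_eq_card_mul_sum_le hf hTn (by omega)
    have hlow := mul_le_mul_of_nonneg_left (hcard s hs)
      (show 0 ≤ (Fintype.card V : 𝕜) - #T by linarith)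
    set k : 𝕜 := (Fintype.card V : 𝕜)
    have : 2 * (k - #T) ≤ k * (k - n) := by nlinarith
    exact le_of_mul_le_mul_left (a := k - n) (by nlinarith [mul_le_mul_of_nonneg_right this hε])
      (by linarith)

lemma two_mul_sum_le_card_mul (hf : ∑ v, f v = 0) {n : ℕ} (hn2 : 2 ≤ n)
    (hn : n + 2 ≤ Fintype.card V) {ε : 𝕜} (hε : 0 ≤ ε)
    (hcard : ∀ s : Finset V, #s = n → -ε ≤ ∑ v ∈ s, f v) (T : Finset V) :
    2 * ∑ v ∈ T, f v ≤ Fintype.card V * ε := by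
  have := neg_card_mul_le_two_mul_sum hf hn2 hn hε hcard Tᶜ
  linarith [sum_add_sum_compl T f]

end Averaging

section IncidentEdges

variable {V : Type*} (G : SimpleGraph V) [Fintype G.edgeSet] (w : Sym2 V → ℝ)

/-- The edges of `G` with at least one endpoint in `s`. Deleting them isolates the vertices of `s`,
so they contain an `(#s + 1)`-way split of a connected graph with more than `#s` vertices. -/
noncomputable def incidentEdges (s : Finset V) : Finset (Sym2 V) :=
  {e ∈ G.edgeFinset | ∃ v ∈ s, v ∈ e}

/-- The edges of `G` with both endpoints in `s`; these are the edges which the sum of the weighted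
degrees over `s` counts twice. -/
noncomputable def innerEdges (s : Finset V) : Finset (Sym2 V) :=
  {e ∈ G.edgeFinset | ∀ v ∈ e, v ∈ s}

/-- The weighted degree of a vertex: the total weight of the edges at `v`. -/
noncomputable def weightedDegree (v : V) : ℝ :=
  weight w {e ∈ G.edgeFinset | v ∈ e}

/-- The excess of a vertex: its weighted degree times the number of vertices, minus `2`. In a
normalized graph the weighted degrees have average `2 / |V|`, so the excesses sum to zero. -/
noncomputable def excess [Fintype V] (v : V) : ℝ :=
  Fintype.card V * weightedDegree G w v - 2

variable {G w}

lemma weight_mono (hw : ∀ e ∈ G.edgeSet, 0 ≤ w e) {S T : Finset (Sym2 V)} (hST : S ⊆ T)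
    (hT : T ⊆ G.edgeFinset) : weight w S ≤ weight w T :=
  sum_le_sum_of_subset_of_nonneg hST fun e he _ => hw e (SimpleGraph.mem_edgeFinset.mp (hT he))

lemma mem_incidentEdges {s : Finset V} {e : Sym2 V} :
    e ∈ incidentEdges G s ↔ e ∈ G.edgeSet ∧ ∃ v ∈ s, v ∈ e := by
  rw [incidentEdges, mem_filter, SimpleGraph.mem_edgeFinset]

lemma mem_innerEdges {s : Finset V} {e : Sym2 V} :
    e ∈ innerEdges G s ↔ e ∈ G.edgeSet ∧ ∀ v ∈ e, v ∈ s := by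
  rw [innerEdges, mem_filter, SimpleGraph.mem_edgeFinset]

lemma incidentEdges_subset_edgeFinset (s : Finset V) : incidentEdges G s ⊆ G.edgeFinset :=
  filter_subset _ _

lemma innerEdges_subset_edgeFinset (s : Finset V) : innerEdges G s ⊆ G.edgeFinset :=
  filter_subset _ _

lemma sum_weightedDegree (s : Finset V) :
    ∑ v ∈ s, weightedDegree G w v = weight w (incidentEdges G s) + weight w (innerEdges G s) := by
  simp only [weightedDegree, weight, incidentEdges, innerEdges, sum_filter]
  rw [sum_comm, ← sum_add_distrib]
  refine sum_congr rfl fun e he => ?_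
  induction e using Sym2.ind with | _ a b
  have hab : a ≠ b := (SimpleGraph.mem_edgeFinset.mp he : G.Adj a b).ne
  have hsplit (v : V) : (if v ∈ s(a, b) then w s(a, b) else 0) =
      (if v = a then w s(a, b) else 0) + (if v = b then w s(a, b) else 0) := by
    by_cases hva : v = a <;> by_cases hvb : v = b <;> simp_all
  have hmeet : (∃ v ∈ s, v ∈ s(a, b)) ↔ a ∈ s ∨ b ∈ s := by aesop
  have hinside : (∀ v ∈ s(a, b), v ∈ s) ↔ a ∈ s ∧ b ∈ s := Sym2.ball
  simp only [hsplit, sum_add_distrib, sum_ite_eq', hmeet, hinside]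
  by_cases ha : a ∈ s <;> by_cases hb : b ∈ s <;> simp [ha, hb]

lemma exists_isSplit_weight_le [Fintype V] (hw : ∀ e ∈ G.edgeSet, 0 ≤ w e) (hG : G.Connected)
    {s : Finset V} (hs : #s < Fintype.card V) :
    ∃ S, IsSplit G S (#s + 1) ∧ weight w S ≤ weight w (incidentEdges G s) := by
  have hisolated : ∀ x ∈ s, ∀ y, ¬ (G.deleteEdges ↑(incidentEdges G s)).Adj x y := by
    intro x hx y hxy
    obtain ⟨hadj, hnot⟩ := SimpleGraph.deleteEdges_adj.mp hxy
    exact hnot (mem_incidentEdges.mpr ⟨hadj, x, hx, Sym2.mem_mk_left x y⟩)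
  have hG1 := numComp_eq_one_of_connected hG
  obtain ⟨S, hS, hcomp⟩ := exists_subset_numComp_deleteEdges_eq G (incidentEdges G s)
    (show numComp G ≤ #s + 1 by omega) (card_add_one_le_numComp_of_isolated hs hisolated)
  have hE := incidentEdges_subset_edgeFinset (G := G) s
  refine ⟨S, ⟨fun e he => SimpleGraph.mem_edgeFinset.mp (hE (hS he)), ?_⟩, weight_mono hw hS hE⟩
  rw [hcomp, hG1, Nat.add_sub_cancel]

variable [Fintype V]

lemma card_mul_weight_incidentEdges (s : Finset V) :
    Fintype.card V * weight w (incidentEdges G s) =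
      2 * #s + ∑ v ∈ s, excess G w v - Fintype.card V * weight w (innerEdges G s) := by
  simp only [excess, sum_sub_distrib, ← mul_sum, sum_weightedDegree, sum_const, nsmul_eq_mul]
  ring

lemma sum_excess_eq_zero (hnorm : weight w G.edgeFinset = 1) : ∑ v, excess G w v = 0 := by
  have hinc : incidentEdges G univ = G.edgeFinset := by
    ext e
    simpa [mem_incidentEdges] using fun _ => ⟨_, Sym2.out_fst_mem e⟩
  have hinner : innerEdges G univ = G.edgeFinset := by
    ext e
    simp [mem_innerEdges]
  have := card_mul_weight_incidentEdges (G := G) (w := w) univ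
  rw [hinc, hinner, hnorm, card_univ] at this
  linarith

lemma card_mul_weight_incidentEdges_le (hw : ∀ e ∈ G.edgeSet, 0 ≤ w e) (s : Finset V) :
    Fintype.card V * weight w (incidentEdges G s) ≤ 2 * #s + ∑ v ∈ s, excess G w v := by
  have hinner : 0 ≤ weight w (innerEdges G s) :=
    weight_mono hw (empty_subset _) (innerEdges_subset_edgeFinset s)
  rw [card_mul_weight_incidentEdges]
  linarith [mul_nonneg (Nat.cast_nonneg (α := ℝ) (Fintype.card V)) hinner]

lemma card_mul_weight_incidentEdges_le_sub (hw : ∀ e ∈ G.edgeSet, 0 ≤ w e) {s : Finset V}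
    {a b : V} (hab : G.Adj a b) (ha : a ∈ s) (hb : b ∈ s) :
    Fintype.card V * weight w (incidentEdges G s) ≤
      2 * #s + ∑ v ∈ s, excess G w v - Fintype.card V * w s(a, b) := by
  have hmem : s(a, b) ∈ innerEdges G s :=
    mem_innerEdges.mpr ⟨hab, Sym2.ball.mpr ⟨ha, hb⟩⟩
  have hinner : w s(a, b) ≤ weight w (innerEdges G s) := by
    simpa [weight] using
      weight_mono hw (singleton_subset_iff.mpr hmem) (innerEdges_subset_edgeFinset s)
  rw [card_mul_weight_incidentEdges]
  gcongr

end IncidentEdges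

section HeavyEdge

variable {V : Type*} [Fintype V] {G : SimpleGraph V} [Fintype G.edgeSet] {w : Sym2 V → ℝ}

lemma card_le_card_mul_beta_add_one (hG : G.Connected) :
    (Fintype.card V : ℝ) ≤ Fintype.card V * beta G + 1 := by
  have := hG.nonempty
  have hm := hG.card_vert_le_card_edgeSet_add_one
  rw [Nat.card_eq_fintype_card, Nat.card_eq_fintype_card, ← SimpleGraph.edgeFinset_card] at hm
  rw [beta, mul_div_cancel₀ _ (by positivity)]
  exact_mod_cast hm

/-- The vertices of excess more than `τ`. -/
noncomputable def highVertices (G : SimpleGraph V) [Fintype G.edgeSet] (w : Sym2 V → ℝ) (τ : ℝ) :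
    Finset V :=
  {v | τ < excess G w v}

lemma weight_incidentEdges_highVertices_le [Nonempty V] (hw : ∀ e ∈ G.edgeSet, 0 ≤ w e)
    {τ ε : ℝ} (hτ : 0 < τ)
    (hexc : ∀ s : Finset V, 2 * ∑ v ∈ s, excess G w v ≤ Fintype.card V * ε) :
    weight w (incidentEdges G (highVertices G w τ)) ≤ (1 / 2 + 1 / τ) * ε := by
  set H := highVertices G w τ
  have hcard : #H * τ ≤ Fintype.card V * ε / 2 := by
    have : #H • τ ≤ ∑ v ∈ H, excess G w v :=
      card_nsmul_le_sum H _ τ fun v hv => (mem_filter.mp hv).2.le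
    rw [nsmul_eq_mul] at this
    linarith [hexc H]
  refine le_of_mul_le_mul_left (a := (Fintype.card V : ℝ)) ?_ (by positivity)
  calc Fintype.card V * weight w (incidentEdges G H)
      ≤ 2 * #H + ∑ v ∈ H, excess G w v := card_mul_weight_incidentEdges_le hw H
    _ ≤ 2 * (Fintype.card V * ε / 2 / τ) + Fintype.card V * ε / 2 := by
      gcongr
      · exact (le_div_iff₀ hτ).mpr hcard
      · linarith [hexc H]
    _ = Fintype.card V * ((1 / 2 + 1 / τ) * ε) := by ring

lemma exists_adj_lt_weight {τ c : ℝ} (hc : 0 ≤ c)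
    (hlt : weight w (incidentEdges G (highVertices G w τ)) + #G.edgeFinset * c <
      weight w G.edgeFinset) :
    ∃ a b, G.Adj a b ∧ excess G w a ≤ τ ∧ excess G w b ≤ τ ∧ c < w s(a, b) := by
  set I := incidentEdges G (highVertices G w τ)
  have hsum : ∑ _e ∈ G.edgeFinset \ I, c < ∑ e ∈ G.edgeFinset \ I, w e := by
    have hrest : ∑ e ∈ G.edgeFinset \ I, w e + weight w I = weight w G.edgeFinset :=
      sum_sdiff (incidentEdges_subset_edgeFinset _)
    refine lt_of_le_of_lt (b := #G.edgeFinset * c) ?_ (by linarith)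
    rw [sum_const, nsmul_eq_mul]
    gcongr
    exact sdiff_subset
  obtain ⟨⟨a, b⟩, he, hce⟩ := exists_lt_of_sum_lt hsum
  obtain ⟨hab, hnot⟩ := mem_sdiff.mp he
  have hlow : ∀ v ∈ s(a, b), excess G w v ≤ τ := fun v hv =>
    not_lt.mp fun h => hnot (mem_incidentEdges.mpr
      ⟨SimpleGraph.mem_edgeFinset.mp hab, v, by simp [highVertices, h], hv⟩)
  exact ⟨a, b, SimpleGraph.mem_edgeFinset.mp hab, hlow a (Sym2.mem_mk_left a b),
    hlow b (Sym2.mem_mk_right a b), hce⟩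

/-- With `τ = 1 / (4β)`, the edges meeting a vertex of excess more than `τ` have total weight at
most `ε / 2 + 4βε ≤ 14βε / 3`. Since `12βε ≤ 1`, this leaves more than `1 / 2 + βε`, the most that
the remaining edges could carry if each had weight at most `(2τ + ε) / |V|`. -/
lemma exists_adj_excess_add_le (hw : ∀ e ∈ G.edgeSet, 0 ≤ w e) (hG : G.Connected)
    (hnorm : weight w G.edgeFinset = 1) (hV : 4 ≤ Fintype.card V) {ε : ℝ} (hε : 0 ≤ ε)
    (hεβ : 12 * beta G * ε ≤ 1)
    (hexc : ∀ s : Finset V, 2 * ∑ v ∈ s, excess G w v ≤ Fintype.card V * ε) :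
    ∃ a b, G.Adj a b ∧ ε ≤ Fintype.card V * w s(a, b) ∧
      excess G w a + excess G w b ≤ Fintype.card V * w s(a, b) - ε := by
  have := hG.nonempty
  set k : ℝ := (Fintype.card V : ℝ)
  set β := beta G
  have hk : 4 ≤ k := Nat.ofNat_le_cast.mpr hV
  have hβ : 3 / 4 ≤ β := by nlinarith [card_le_card_mul_beta_add_one hG]
  set τ := 1 / (4 * β) with hτ
  have hhigh : weight w (incidentEdges G (highVertices G w τ)) ≤ ε / 2 + 4 * (β * ε) := by
    refine (weight_incidentEdges_highVertices_le hw (by positivity) hexc).trans_eq ?_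
    rw [hτ, one_div_one_div]
    ring
  have hthreshold : #G.edgeFinset * ((2 * τ + ε) / k) = 1 / 2 + β * ε := by
    have hE : (#G.edgeFinset : ℝ) = β * k := (div_mul_cancel₀ _ (by positivity)).symm
    rw [hE, hτ]
    field_simp
    ring
  have hε' : ε ≤ 4 / 3 * (β * ε) := by nlinarith
  obtain ⟨a, b, hab, ha, hb, hlt⟩ := exists_adj_lt_weight (G := G) (w := w) (τ := τ)
    (c := (2 * τ + ε) / k) (by positivity) (by rw [hthreshold, hnorm]; linarith)
  rw [div_lt_iff₀' (by positivity)] at hlt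
  have hτ0 : 0 ≤ τ := by positivity
  exact ⟨a, b, hab, by linarith, by linarith⟩

end HeavyEdge

section Splits

variable {V : Type*} [Fintype V] {G : SimpleGraph V} [Fintype G.edgeSet] {w : Sym2 V → ℝ}

lemma exists_card_eq_card_mul_weight_incidentEdges_le (hw : ∀ e ∈ G.edgeSet, 0 ≤ w e)
    (hG : G.Connected) (hnorm : weight w G.edgeFinset = 1) {ε : ℝ} (hε : 0 ≤ ε)
    (hεβ : 12 * beta G * ε ≤ 1) {n : ℕ} (hn2 : 2 ≤ n) (hn : n < Fintype.card V) :
    ∃ s : Finset V, #s = n ∧ Fintype.card V * weight w (incidentEdges G s) ≤ 2 * n - ε := by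
  rcases (Nat.succ_le_of_lt hn).eq_or_lt with hnV | hnV
  · obtain ⟨s, -, hs⟩ := exists_subset_card_eq (s := (univ : Finset V)) (n := n)
      (by rw [card_univ]; exact hn.le)
    have hweight : weight w (incidentEdges G s) ≤ 1 :=
      hnorm ▸ weight_mono hw (incidentEdges_subset_edgeFinset s) subset_rfl
    have hβ := card_le_card_mul_beta_add_one hG
    rw [← hnV] at hβ ⊢
    push_cast at hβ ⊢
    have hn2' : (2 : ℝ) ≤ n := mod_cast hn2
    have hε1 : ε ≤ 1 := by nlinarith
    exact ⟨s, hs, by nlinarith⟩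
  by_cases hlow : ∃ s : Finset V, #s = n ∧ ∑ v ∈ s, excess G w v < -ε
  · obtain ⟨s, rfl, hs⟩ := hlow
    exact ⟨s, rfl, by linarith [card_mul_weight_incidentEdges_le hw s]⟩
  · push Not at hlow
    have hzero := sum_excess_eq_zero hnorm
    obtain ⟨a, b, hab, hε', hexc⟩ := exists_adj_excess_add_le hw hG hnorm (by omega) hε hεβ
      (two_mul_sum_le_card_mul hzero hn2 hnV hε hlow)
    obtain ⟨s, habs, rfl, hs⟩ := exists_superset_card_eq_sum_le hzero (s := {a, b})
      (by rwa [card_pair hab.ne]) hn (sub_nonneg.mpr hε') (by rwa [sum_pair hab.ne])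
    rw [insert_subset_iff, singleton_subset_iff] at habs
    exact ⟨s, rfl, by linarith [card_mul_weight_incidentEdges_le_sub hw hab habs.1 habs.2]⟩

end Splits

theorem exists_low_density_three_and_four_way_splits_general
    {V : Type*} [Fintype V] (G : SimpleGraph V) [Fintype G.edgeSet]
    (w : Sym2 V → ℝ) (hw : ∀ e ∈ G.edgeSet, 0 ≤ w e) (hconn : G.Connected)
    (hnorm : weight w G.edgeFinset = 1) (ε : ℝ) (hε : 0 ≤ ε) (hεβ : 12 * beta G * ε ≤ 1)
    (h : ℕ) (h3 : 3 ≤ h) (hV : h ≤ Fintype.card V) :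
    ∃ S : Finset (Sym2 V), IsSplit G S h ∧
      density w S h ≤ (2 - ε / (h - 1)) / (Fintype.card V : ℝ) := by
  obtain ⟨n, rfl⟩ : ∃ n, h = n + 1 := ⟨h - 1, by omega⟩
  obtain ⟨s, rfl, hs⟩ := exists_card_eq_card_mul_weight_incidentEdges_le hw hconn hnorm hε hεβ
    (show 2 ≤ n by omega) hV
  obtain ⟨S, hS, hSs⟩ := exists_isSplit_weight_le hw hconn hV
  refine ⟨S, hS, ?_⟩
  have hs0 : (0 : ℝ) < #s := by exact_mod_cast (show 0 < #s by omega)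
  have hV0 : (0 : ℝ) < Fintype.card V := by exact_mod_cast (show 0 < Fintype.card V by omega)
  rw [density, Nat.cast_add_one, add_sub_cancel_right, le_div_iff₀ hV0, div_mul_eq_mul_div,
    div_le_iff₀ hs0, sub_mul, div_mul_cancel₀ _ hs0.ne']
  linarith [mul_le_mul_of_nonneg_left hSs hV0.le]

theorem exists_low_density_three_and_four_way_splits
    {V : Type*} [Fintype V] [DecidableEq V]
    (G : SimpleGraph V) [DecidableRel G.Adj]
    (w : Sym2 V → ℝ) (hw : ∀ e ∈ G.edgeSet, 0 < w e)
    (hconn : G.Connected)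
    (hnorm : weight w G.edgeFinset = 1)
    (ε : ℝ) (hε : ε = 1 / (35 * beta G)) :
    (3 ≤ Fintype.card V → ∃ S : Finset (Sym2 V), IsSplit G S 3 ∧
      density w S 3 ≤ (2 - ε / 2) / (Fintype.card V : ℝ)) ∧
    (4 ≤ Fintype.card V → ∃ S : Finset (Sym2 V), IsSplit G S 4 ∧
      density w S 4 ≤ (2 - ε / 3) / (Fintype.card V : ℝ)) := by
  have hε0 : 0 ≤ ε := by rw [hε, beta]; positivity
  have hεβ : 12 * beta G * ε ≤ 1 := by
    rw [hε]
    calc 12 * beta G * (1 / (35 * beta G)) = 12 / 35 * (beta G * (beta G)⁻¹) := by ring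
      _ ≤ 1 := by linarith [mul_inv_le_one (a := beta G)]
  have hsplit := exists_low_density_three_and_four_way_splits_general G w
    (fun e he => (hw e he).le) hconn hnorm ε hε0 hεβ
  exact ⟨
    fun hV => by simpa [show (3 : ℝ) - 1 = 2 by norm_num] using hsplit 3 le_rfl hV,
    fun hV => by simpa [show (4 : ℝ) - 1 = 3 by norm_num] using hsplit 4 (by omega) hV⟩

end KCut
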